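/- arXiv:1809.09021 — 10 statements merged into one kernel-verified Lean document; each statement's English description precedes it below -/
import Mathlib

section
/- Let f : X → Y and f' : X' → Y' be continuous surjections between topological spaces, and suppose there exists a continuous map h : Y → Y' with the following property: whenever f' admits a partial section over a subset A ⊆ Y', the map f admits a partial section over h⁻¹(A) ⊆ Y. Then sec(f) ≤ sec(f'). -/
open unitInterval

/-- A partial section of `p : E → B` over a subset `A ⊆ B`: a continuous map
`s : A → E` with `p (s a) = a` for all `a ∈ A`. -/
def HasPartialSection {E B : Type*} [TopologicalSpace E] [TopologicalSpace B]
    (p : E → B) (A : Set B) : Prop :=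
  ∃ s : C(A, E), ∀ a : A, p (s a) = (a : B)

/-- A witness that the sectional number of `p` is at most `n`: an increasing sequence of
open subsets `∅ = U 0 ⊆ U 1 ⊆ ⋯ ⊆ U n = B` such that `p` admits a partial section over
each difference `U i \ U (i-1)`, `i = 1, …, n`. -/
def SecWitness {E B : Type*} [TopologicalSpace E] [TopologicalSpace B]
    (p : E → B) (n : ℕ) : Prop :=
  ∃ U : ℕ → Set B, U 0 = ∅ ∧ U n = Set.univ ∧ Monotone U ∧
    (∀ i, IsOpen (U i)) ∧
    ∀ i, 1 ≤ i → i ≤ n → HasPartialSection p (U i \ U (i - 1))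

/-- The sectional number `sec(p)`, an element of `ℕ∞` (equal to `⊤ = ∞` if no finite
witness exists). -/
noncomputable def secNum {E B : Type*} [TopologicalSpace E] [TopologicalSpace B]
    (p : E → B) : ℕ∞ :=
  sInf {n : ℕ∞ | ∃ m : ℕ, n = (m : ℕ∞) ∧ SecWitness p m}

/-- The projection `π_f : X^I → X × Y`, `α ↦ (α 0, f (α 1))`. -/
def piMap {X Y : Type*} [TopologicalSpace X] [TopologicalSpace Y]
    (f : X → Y) : C(unitInterval, X) → X × Y :=
  fun α => (α 0, f (α 1))

/-- The topological complexity of a map: `TC(f) = sec(π_f)`. -/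
noncomputable def TCmap {X Y : Type*} [TopologicalSpace X] [TopologicalSpace Y]
    (f : X → Y) : ℕ∞ :=
  secNum (piMap f)

/-- The topological complexity of a space: `TC(X) = sec(π : X^I → X × X)`. -/
noncomputable def TCspace (X : Type*) [TopologicalSpace X] : ℕ∞ :=
  TCmap (id : X → X)

/-- The Lusternik–Schnirelmann category of `X` (with basepoint `x₀`):
`cat(X) = sec(ev₁ : PX → X)` where `PX` is the space of paths starting at `x₀`. -/
noncomputable def catSpace (X : Type*) [TopologicalSpace X] (x₀ : X) : ℕ∞ :=
  secNum (fun α : {γ : C(unitInterval, X) // γ 0 = x₀} => (α : C(unitInterval, X)) 1)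

/-- Two (continuous) maps are homotopic: there is a continuous homotopy between them. -/
def FnHomotopic {X Y : Type*} [TopologicalSpace X] [TopologicalSpace Y]
    (f g : X → Y) : Prop :=
  ∃ H : C(X × unitInterval, Y), (∀ x, H (x, 0) = f x) ∧ (∀ x, H (x, 1) = g x)

/-- A subset `A ⊆ X` is categorical in `X` if the inclusion `A ↪ X` is homotopic to a
constant map. -/
def IsCategorical {X : Type*} [TopologicalSpace X] (A : Set X) : Prop :=
  ∃ x : X, FnHomotopic (fun a : A => (a : X)) (fun _ => x)

/-- A Hurewicz fibration: a map with the homotopy lifting property with respect to all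
topological spaces. -/
def IsHurewiczFibration {E B : Type*} [TopologicalSpace E] [TopologicalSpace B]
    (p : E → B) : Prop :=
  ∀ (Z : Type*) [TopologicalSpace Z] (g : C(Z, E)) (H : C(Z × unitInterval, B)),
    (∀ z, H (z, 0) = p (g z)) →
    ∃ H' : C(Z × unitInterval, E), (∀ z, H' (z, 0) = g z) ∧ ∀ zt, p (H' zt) = H zt

theorem secNum_le_of_comparison
    {X Y X' Y' : Type*} [TopologicalSpace X] [TopologicalSpace Y]
    [TopologicalSpace X'] [TopologicalSpace Y']
    (f : X → Y) (hf : Continuous f) (hfs : Function.Surjective f)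
    (f' : X' → Y') (hf' : Continuous f') (hf's : Function.Surjective f')
    (h : Y → Y') (hh : Continuous h)
    (hsec : ∀ A : Set Y', HasPartialSection f' A → HasPartialSection f (h ⁻¹' A)) :
    secNum f ≤ secNum f' := by
  apply le_sInf
  rintro _ ⟨m, rfl, U, hU0, hUm, hmono, hopen, hpart⟩
  -- The preimages under `h` of a filtration for `f'` form a filtration of the same length for `f`,
  -- since `h ⁻¹' (U i \ U (i - 1)) = h ⁻¹' U i \ h ⁻¹' U (i - 1)`.
  exact sInf_le ⟨m, rfl, fun i => h ⁻¹' U i, by simp [hU0], by simp [hUm],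
    fun i j hij => Set.preimage_mono (hmono hij), fun i => (hopen i).preimage hh,
    fun i h1 hm => hsec _ (hpart i h1 hm)⟩
end

section
/- For every continuous surjection f : X → Y between path-connected topological spaces, TC(f) ≥ cat(Y). -/
/-!
Choose `x₀` with `f x₀ = y₀`. Restricting a witness for `sec(π_f)` to the slice `{x₀} × Y` gives
open sets filtering `Y`, and over each difference a section `s` of `π_f` yields `y ↦ f ∘ s (x₀, y)`,
a continuous family of paths from `f x₀ = y₀` to `y`. So every witness for `TC(f)` induces one for
`cat(Y)` of the same length.
-/

open unitInterval

theorem tc_ge_cat_codomain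
    {X Y : Type*} [TopologicalSpace X] [TopologicalSpace Y]
    [PathConnectedSpace X] [PathConnectedSpace Y]
    (f : X → Y) (hf : Continuous f) (hfs : Function.Surjective f) :
    ∀ y₀ : Y, catSpace Y y₀ ≤ TCmap f := by
  intro y₀
  obtain ⟨x₀, rfl⟩ := hfs y₀
  refine sInf_le_sInf ?_
  rintro _ ⟨m, rfl, U, hU0, hUm, hmono, hopen, hsec⟩
  refine ⟨m, rfl, fun i => (fun y => (x₀, y)) ⁻¹' U i, by simp [hU0], by simp [hUm],
    fun i j hij => Set.preimage_mono (hmono hij),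
    fun i => (hopen i).preimage (by fun_prop), ?_⟩
  intro i hi him
  obtain ⟨s, hs⟩ := hsec i hi him
  have hs0 : ∀ a, s a 0 = a.1.1 := fun a => congrArg Prod.fst (hs a)
  have hs1 : ∀ a, f (s a 1) = a.1.2 := fun a => congrArg Prod.snd (hs a)
  refine ⟨⟨fun a => ⟨(⟨f, hf⟩ : C(X, Y)).comp (s ⟨(x₀, a.1), a.2⟩), ?_⟩, ?_⟩, ?_⟩
  · exact congrArg f (hs0 _)
  · refine Continuous.subtype_mk ((ContinuousMap.continuous_postcomp _).comp
      (s.continuous.comp (Continuous.subtype_mk ?_ _))) _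
    fun_prop
  · intro a
    exact hs1 _
end

section
/- For every continuous surjection f : X → Y between path-connected topological spaces, TC(f) ≥ sec(f). In particular, if TC(f) = 1 then f admits a continuous global section s : Y → X with f ∘ s = id_Y. -/
/-!
Fix a point `x₀` of `X`. Slicing `X × Y` along `y ↦ (x₀, y)` turns a partial section `s` of
`π_f` over `A` into a partial section `y ↦ s (x₀, y) 1` of `f` over the slice of `A`
(`HasPartialSection.slice`). Slices of open sets are open and slicing commutes with differences,
so a filtration of `X × Y` witnessing `sec(π_f) ≤ n` slices to one of `Y` witnessing
`sec(f) ≤ n` (`SecWitness.slice`). If `TC(f) = 1`, then the infimum is attained, and a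
filtration `∅ = U 0 ⊆ U 1 = Y` of length one carries a global section.
-/

open unitInterval

lemma HasPartialSection.slice {X Y : Type*} [TopologicalSpace X] [TopologicalSpace Y]
    {f : X → Y} {A : Set (X × Y)} (h : HasPartialSection (piMap f) A) (x₀ : X) :
    HasPartialSection f ((fun y => (x₀, y)) ⁻¹' A) := by
  obtain ⟨s, hs⟩ := h
  refine ⟨⟨fun y => s ⟨(x₀, y.1), y.2⟩ 1, ?_⟩, fun y => ?_⟩
  · exact (continuous_eval_const (1 : unitInterval)).comp
      (s.continuous.comp (by fun_prop))
  · exact congrArg Prod.snd (hs ⟨(x₀, y.1), y.2⟩)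

lemma SecWitness.slice {X Y : Type*} [TopologicalSpace X] [TopologicalSpace Y]
    {f : X → Y} {n : ℕ} (h : SecWitness (piMap f) n) (x₀ : X) : SecWitness f n := by
  obtain ⟨U, h0, hn, hmono, hopen, hsec⟩ := h
  refine ⟨fun i => (fun y => (x₀, y)) ⁻¹' U i, by simp [h0], by simp [hn],
    fun i j hij => Set.preimage_mono (hmono hij),
    fun i => (hopen i).preimage (by fun_prop), fun i h1 hi => ?_⟩
  exact (hsec i h1 hi).slice x₀

/-- A finite sectional number is attained, since `ℕ∞` is well-ordered. -/
lemma secWitness_of_secNum_eq {E B : Type*} [TopologicalSpace E] [TopologicalSpace B]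
    {p : E → B} {n : ℕ} (h : secNum p = n) : SecWitness p n := by
  have hne : {k : ℕ∞ | ∃ m : ℕ, k = (m : ℕ∞) ∧ SecWitness p m}.Nonempty := by
    by_contra hempty
    rw [Set.not_nonempty_iff_eq_empty] at hempty
    rw [secNum, hempty, sInf_empty] at h
    exact ENat.natCast_ne_top n h.symm
  obtain ⟨m, hm, hw⟩ := csInf_mem hne
  have hmn : n = m := by
    rw [← secNum, h] at hm
    exact_mod_cast hm
  exact hmn ▸ hw

lemma SecWitness.exists_section {E B : Type*} [TopologicalSpace E] [TopologicalSpace B]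
    {p : E → B} (h : SecWitness p 1) : ∃ s : B → E, Continuous s ∧ ∀ b, p (s b) = b := by
  obtain ⟨U, h0, h1, -, -, hsec⟩ := h
  obtain ⟨s, hs⟩ := hsec 1 le_rfl le_rfl
  have hmem (b : B) : b ∈ U 1 \ U (1 - 1) := by simp [h0, h1]
  exact ⟨fun b => s ⟨b, hmem b⟩, s.continuous.comp (by fun_prop), fun b => hs ⟨b, hmem b⟩⟩

theorem tc_ge_secNum
    {X Y : Type*} [TopologicalSpace X] [TopologicalSpace Y]
    [PathConnectedSpace X] [PathConnectedSpace Y]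
    (f : X → Y) (hf : Continuous f) (hfs : Function.Surjective f) :
    secNum f ≤ TCmap f ∧
    (TCmap f = 1 → ∃ s : Y → X, Continuous s ∧ ∀ y, f (s y) = y) := by
  obtain ⟨x₀⟩ : Nonempty X := PathConnectedSpace.nonempty
  refine ⟨sInf_le_sInf ?_, fun h => ?_⟩
  · rintro k ⟨m, rfl, hw⟩
    exact ⟨m, rfl, hw.slice x₀⟩
  · exact ((secWitness_of_secNum_eq (n := 1) (by exact_mod_cast h)).slice x₀).exists_section
end

section
/- Let f : X → Y be a continuous surjection between path-connected topological spaces. If there exists a point y₀ ∈ Y such that the fibre f⁻¹(y₀) is categorical in X, then TC(f) ≥ cat(X). -/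
/-!
Restrict a filtration for `π_f` along the slice `x ↦ (x, y₀)`. A partial section of `π_f` over
`(x, y₀)`, `x ∈ A`, is a continuous choice of paths from `x` to points of the fibre over `y₀`, that
is, a homotopy from the inclusion `A ↪ X` to a map that factors through the fibre. The fibre
contracts in `X` to a point, and path-connectedness moves that point to `x₀`. The resulting
homotopy from the inclusion of `A` to the constant map at `x₀`, reversed and curried, is a partial
section of `ev₁ : PX → X` over `A` (`hasPartialSection_ev_of_slice`).
-/

open unitInterval

/-- A partial section of `π_f` over `C` yields a partial section of the based path evaluation over
the slice `{x | (x, y₀) ∈ C}`, when the fibre over `y₀` is categorical. -/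
lemma hasPartialSection_ev_of_slice
    {X Y : Type*} [TopologicalSpace X] [TopologicalSpace Y] [PathConnectedSpace X]
    (f : X → Y) (y₀ : Y) (hcat : IsCategorical (f ⁻¹' {y₀})) (x₀ : X)
    (C : Set (X × Y)) (hC : HasPartialSection (piMap f) C) :
    HasPartialSection
      (fun α : {γ : C(unitInterval, X) // γ 0 = x₀} => (α : C(unitInterval, X)) 1)
      ((fun x : X => (x, y₀)) ⁻¹' C) := by
  obtain ⟨s, hs⟩ := hC
  obtain ⟨x₁, H, hH0, hH1⟩ := hcat
  let A : Set X := (fun x : X => (x, y₀)) ⁻¹' C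
  let j : C(A, C) := ⟨fun a => ⟨((a : X), y₀), a.2⟩, by fun_prop⟩
  have hs0 : ∀ a : A, s (j a) 0 = (a : X) := fun a => congrArg Prod.fst (hs (j a))
  have hs1 : ∀ a : A, f (s (j a) 1) = y₀ := fun a => congrArg Prod.snd (hs (j a))
  let g : C(A, (f ⁻¹' {y₀} : Set X)) :=
    ⟨fun a => ⟨s (j a) 1, hs1 a⟩, by fun_prop⟩
  let incl : C(A, X) := ⟨fun a => (a : X), by fun_prop⟩
  let e : C(A, X) := ⟨fun a => s (j a) 1, by fun_prop⟩
  let F₁ : incl.Homotopy e :=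
    { toFun := fun p => s (j p.2) p.1
      continuous_toFun := by fun_prop
      map_zero_left := hs0
      map_one_left := fun _ => rfl }
  let F₂ : e.Homotopy (ContinuousMap.const A x₁) :=
    { toFun := fun p => H (g p.2, p.1)
      continuous_toFun := by fun_prop
      map_zero_left := fun a => hH0 (g a)
      map_one_left := fun a => hH1 (g a) }
  let γ : Path x₁ x₀ := PathConnectedSpace.somePath x₁ x₀
  let F₃ : (ContinuousMap.const A x₁).Homotopy (ContinuousMap.const A x₀) :=
    { toFun := fun p => γ p.1
      continuous_toFun := by fun_prop
      map_zero_left := fun _ => γ.source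
      map_one_left := fun _ => γ.target }
  let F := ((F₁.trans F₂).trans F₃).symm
  let K : C(A, C(unitInterval, X)) :=
    ContinuousMap.curry ⟨fun p : A × unitInterval => F (p.2, p.1), by fun_prop⟩
  exact ⟨⟨fun a => ⟨K a, F.apply_zero a⟩, by fun_prop⟩, fun a => F.apply_one a⟩

theorem tc_ge_cat_domain
    {X Y : Type*} [TopologicalSpace X] [TopologicalSpace Y]
    [PathConnectedSpace X] [PathConnectedSpace Y]
    (f : X → Y) (hf : Continuous f) (hfs : Function.Surjective f)
    (y₀ : Y) (hcat : IsCategorical (f ⁻¹' {y₀})) :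
    ∀ x₀ : X, catSpace X x₀ ≤ TCmap f := by
  intro x₀
  refine sInf_le_sInf ?_
  rintro _ ⟨m, rfl, U, hU0, hUm, hmono, hopen, hsec⟩
  refine ⟨m, rfl, fun i => (fun x : X => (x, y₀)) ⁻¹' U i, by simp [hU0], by simp [hUm],
    fun i k hik => Set.preimage_mono (hmono hik),
    fun i => (hopen i).preimage (by fun_prop), fun i h1 hm => ?_⟩
  exact hasPartialSection_ev_of_slice f y₀ hcat x₀ _ (hsec i h1 hm)
end

section
/- Let X̂, X, Y be path-connected topological spaces, let v : X̂ → X be continuous, and let f : X → Y be a continuous surjection such that f ∘ v is also surjective. If v admits a right homotopy inverse, i.e., a continuous map u : X → X̂ with v ∘ u homotopic to id_X, then TC(f ∘ v) ≥ TC(f). -/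
/-!
Let `H` be a homotopy from `v ∘ u` to `id`. Given open sets `U i` of `Xh × Y` witnessing
`TC(f ∘ v) ≤ n`, their preimages under `u × id : X × Y → Xh × Y` witness `TC(f) ≤ n`. Indeed, if
`s` is a partial section of `π_{f ∘ v}` over `U i \ U (i - 1)` and `(u x, y)` lies in this
difference, then `s (u x, y)` is a path from `u x` to a point that `f ∘ v` sends to `y`. Its image
under `v` starts at `v (u x)`, and preceding it by the track of `H` at `x` run backwards gives a
path from `x` whose endpoint is sent by `f` to `y`. This path depends continuously on `(x, y)`.
-/

open unitInterval

/-- Concatenation in families: a family of paths `G` followed by a family of paths `K`, matching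
at the middle, gives a continuous map into the space of paths. -/
lemma exists_concat {A X : Type*} [TopologicalSpace A] [TopologicalSpace X]
    (G K : C(A × unitInterval, X)) (h : ∀ a, G (a, 1) = K (a, 0)) :
    ∃ s : C(A, C(unitInterval, X)), ∀ a, s a 0 = G (a, 0) ∧ s a 1 = K (a, 1) := by
  let pr : ℝ → unitInterval := Set.projIcc 0 1 zero_le_one
  have hpr : Continuous pr := continuous_projIcc
  let L : A × unitInterval → X := fun p =>
    if (p.2 : ℝ) ≤ 1 / 2 then G (p.1, pr (2 * p.2)) else K (p.1, pr (2 * p.2 - 1))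
  have hL : Continuous L := by
    refine Continuous.if_le (by fun_prop) (by fun_prop) (by fun_prop) continuous_const ?_
    intro p hp
    have h1 : pr (2 * p.2) = 1 := by
      rw [hp]; exact Set.projIcc_of_right_le _ (by norm_num)
    have h0 : pr (2 * p.2 - 1) = 0 := by
      rw [hp]; exact Set.projIcc_of_le_left _ (by norm_num)
    rw [h1, h0, h]
  refine ⟨ContinuousMap.curry ⟨L, hL⟩, fun a => ⟨?_, ?_⟩⟩
  · have h0 : pr 0 = 0 := Set.projIcc_of_le_left _ (by norm_num)
    simp [L, h0]
  · have h1 : pr (2 - 1) = 1 := Set.projIcc_of_right_le _ (by norm_num)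
    have h2 : ¬ (1 : ℝ) ≤ 2⁻¹ := by norm_num
    simp only [ContinuousMap.curry_apply, ContinuousMap.coe_mk, L]
    simp [h1, h2]

/-- A partial section of `π_{f ∘ v}` over `A` yields one of `π_f` over the preimage of `A` under
`u × id`. -/
lemma HasPartialSection.precomp {Xh X Y : Type*} [TopologicalSpace Xh] [TopologicalSpace X]
    [TopologicalSpace Y] {v : Xh → X} (hv : Continuous v) {f : X → Y} {u : X → Xh}
    (hu : Continuous u) (hvu : FnHomotopic (v ∘ u) id) {A : Set (Xh × Y)}
    (hA : HasPartialSection (piMap (f ∘ v)) A) :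
    HasPartialSection (piMap f) (Prod.map u id ⁻¹' A) := by
  obtain ⟨H, H0, H1⟩ := hvu
  obtain ⟨s, hs⟩ := hA
  let j : C((Prod.map u id ⁻¹' A : Set (X × Y)), A) :=
    ⟨fun a => ⟨Prod.map u id a.1, a.2⟩, by fun_prop⟩
  have hs0 (a) : s (j a) 0 = u a.1.1 := congrArg Prod.fst (hs (j a))
  have hs1 (a) : f (v (s (j a) 1)) = a.1.2 := congrArg Prod.snd (hs (j a))
  let G : C((Prod.map u id ⁻¹' A : Set (X × Y)) × unitInterval, X) :=
    ⟨fun p => H (p.1.1.1, σ p.2), by fun_prop⟩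
  let K : C((Prod.map u id ⁻¹' A : Set (X × Y)) × unitInterval, X) :=
    ⟨fun p => v (s (j p.1) p.2), by fun_prop⟩
  obtain ⟨c, hc⟩ := exists_concat G K fun a => by simp [G, K, H0, hs0]
  refine ⟨c, fun a => Prod.ext ?_ ?_⟩
  · simp [piMap, (hc a).1, G, H1]
  · simp [piMap, (hc a).2, K, hs1]

theorem tc_precomp_right_homotopy_inverse
    {Xh X Y : Type*} [TopologicalSpace Xh] [TopologicalSpace X] [TopologicalSpace Y]
    [PathConnectedSpace Xh] [PathConnectedSpace X] [PathConnectedSpace Y]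
    (v : Xh → X) (hv : Continuous v)
    (f : X → Y) (hf : Continuous f) (hfs : Function.Surjective f)
    (hfvs : Function.Surjective (f ∘ v))
    (u : X → Xh) (hu : Continuous u) (hvu : FnHomotopic (v ∘ u) id) :
    TCmap f ≤ TCmap (f ∘ v) := by
  refine sInf_le_sInf ?_
  rintro _ ⟨m, rfl, U, hU0, hUm, hmono, hopen, hsec⟩
  refine ⟨m, rfl, fun i => Prod.map u id ⁻¹' U i, by simp [hU0], by simp [hUm],
    fun _ _ hij => Set.preimage_mono (hmono hij),
    fun i => (hopen i).preimage (hu.prodMap continuous_id), fun i h1 hi => ?_⟩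
  exact (hsec i h1 hi).precomp hv hu hvu
end

section
/- Let X̂ be a path-connected topological space containing X as a subspace, with inclusion i : X ↪ X̂, and let v : X̂ → X be a deformation retraction, i.e., a continuous map with v ∘ i = id_X and i ∘ v homotopic to id_{X̂}. Then for every continuous surjection f : X → Y onto a path-connected space Y, TC(f) = TC(f ∘ v). -/
/-!
Witnesses for sectional numbers pull back: if a continuous `φ : B' → B` is such that partial
sections of `p` over `A` induce partial sections of `p'` over `φ ⁻¹' A`, then `sec(p') ≤ sec(p)`
(`secNum_le_of_pullback`). The theorem follows by applying this twice.

* Along the inclusion `X × Y → Xh × Y`: a path `α` in `Xh` from `x ∈ X` to `z` with `f (v z) = y`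
  yields the path `v ∘ α` in `X` from `v x = x` to `v z`.
* Along `v × id : Xh × Y → X × Y`: a path `β` in `X` from `v x` to `z` with `f z = y`, preceded by
  the track of the deformation from `x` to `v x`, is a path in `Xh` from `x` to `z`, and
  `f (v z) = f z = y` since `v` is a retraction.
-/

open unitInterval

theorem secNum_le_of_pullback {E B E' B' : Type*} [TopologicalSpace E] [TopologicalSpace B]
    [TopologicalSpace E'] [TopologicalSpace B'] (p : E → B) (p' : E' → B')
    (φ : B' → B) (hφ : Continuous φ)
    (h : ∀ A : Set B, HasPartialSection p A → HasPartialSection p' (φ ⁻¹' A)) :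
    secNum p' ≤ secNum p := by
  refine sInf_le_sInf ?_
  rintro _ ⟨m, rfl, U, h0, hm, hmono, hopen, hsec⟩
  refine ⟨m, rfl, fun i => φ ⁻¹' U i, ?_, ?_, ?_, fun i => (hopen i).preimage hφ, ?_⟩
  · simp [h0]
  · simp [hm]
  · exact fun i j hij => Set.preimage_mono (hmono hij)
  · exact fun i h1 h2 => h _ (hsec i h1 h2)

theorem tc_invariant_deformation_retraction_domain
    {Xh Y : Type*} [TopologicalSpace Xh] [TopologicalSpace Y]
    [PathConnectedSpace Xh] [PathConnectedSpace Y]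
    (X : Set Xh) [PathConnectedSpace X]
    (v : Xh → X) (hv : Continuous v)
    (hretr : ∀ x : X, v (x : Xh) = x)
    (hdef : FnHomotopic (fun x' : Xh => ((v x' : Xh))) id)
    (f : X → Y) (hf : Continuous f) (hfs : Function.Surjective f) :
    TCmap f = TCmap (f ∘ v) := by
  apply le_antisymm
  · refine secNum_le_of_pullback _ _ (fun q : X × Y => ((q.1 : Xh), q.2)) (by fun_prop) ?_
    rintro A ⟨s, hs⟩
    refine ⟨⟨fun a => (⟨v, hv⟩ : C(Xh, X)).comp (s ⟨_, a.2⟩), by fun_prop⟩, ?_⟩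
    rintro ⟨⟨x, y⟩, ha⟩
    have h := hs ⟨_, ha⟩
    simp only [piMap, Function.comp_apply, Prod.mk.injEq] at h
    simp [piMap, h.1, h.2, hretr]
  · refine secNum_le_of_pullback _ _ (fun q : Xh × Y => (v q.1, q.2)) (by fun_prop) ?_
    rintro A ⟨s, hs⟩
    obtain ⟨H, H0, H1⟩ := hdef
    let P := (fun q : Xh × Y => (v q.1, q.2)) ⁻¹' A
    let r : P → C(I, X) := fun a => s ⟨_, a.2⟩
    have hr : Continuous r := by fun_prop
    have hr0 (a : P) : r a 0 = v a.1.1 := congrArg Prod.fst (hs ⟨_, a.2⟩)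
    have hr1 (a : P) : f (r a 1) = a.1.2 := congrArg Prod.snd (hs ⟨_, a.2⟩)
    -- The deformation runs from `i ∘ v` to the identity, so its tracks are reversed.
    let γ₁ : ∀ a : P, Path a.1.1 (v a.1.1 : Xh) := fun a =>
      { toFun := fun t => H (a.1.1, σ t)
        continuous_toFun := by fun_prop
        source' := by simp [H1]
        target' := by simp [H0] }
    let γ₂ : ∀ a : P, Path (v a.1.1 : Xh) (r a 1 : Xh) := fun a =>
      { toFun := fun t => r a t
        continuous_toFun := by fun_prop
        source' := by simp [hr0]
        target' := rfl }
    have h₁ : Continuous ↿γ₁ := by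
      change Continuous fun q : P × I => H (q.1.1.1, σ q.2)
      fun_prop
    have h₂ : Continuous ↿γ₂ := by
      change Continuous fun q : P × I => (r q.1 q.2 : Xh)
      fun_prop
    have h₃ := Path.trans_continuous_family γ₁ h₁ γ₂ h₂
    let K : C(P × I, Xh) := ⟨fun q => (γ₁ q.1).trans (γ₂ q.1) q.2, h₃⟩
    refine ⟨K.curry, fun a => Prod.ext ?_ ?_⟩
    · exact ((γ₁ a).trans (γ₂ a)).source
    · change f (v ((γ₁ a).trans (γ₂ a) 1)) = _
      rw [Path.target, hretr, hr1]
end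

section
/- Let f : X → Y and f' : X' → Y be continuous surjections from path-connected spaces onto a path-connected space Y, and assume there exist continuous fibrewise maps u : X → X' and v : X' → X (i.e., f' ∘ u = f and f ∘ v = f') such that u ∘ v is homotopic to id_{X'} and v ∘ u is homotopic to id_X. Then TC(f) = TC(f'). In particular, topological complexity of a map is a fibre homotopy equivalence invariant. -/
/-!
If `u : X → X'` satisfies `f' ∘ u = f` and has a homotopy right inverse `v : X' → X`, then
`TC(f') ≤ TC(f)`. Indeed, pull a filtration of `X × Y` back along `v × id`. If `s` is a partial
section of `π_f`, then `u ∘ s (v x', y)` runs from `u (v x')` to a point of the `f'`-fibre over `y`,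
and prepending the track of `x'` under the homotopy from `id` to `u ∘ v` moves its starting point
to `x'` (`HasPartialSection.transfer`). The theorem follows by applying this inequality
(`TCmap_le_of_domination`) to `(u, v)` and to `(v, u)`.
-/

open unitInterval

/-- The concatenation of the reversed homotopy track of `x'` with `u ∘ s (v x', y)` is a partial
section of `π_{f'}` over the preimage of `A` under `v × id`. -/
lemma HasPartialSection.transfer
    {X X' Y : Type*} [TopologicalSpace X] [TopologicalSpace X'] [TopologicalSpace Y]
    {f : X → Y} {f' : X' → Y} {u : X → X'} (hu : Continuous u) (hfu : f' ∘ u = f)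
    {v : X' → X} (hv : Continuous v) (huv : FnHomotopic (u ∘ v) id) {A : Set (X × Y)}
    (hA : HasPartialSection (piMap f) A) :
    HasPartialSection (piMap f') (Prod.map v id ⁻¹' A) := by
  obtain ⟨H, H0, H1⟩ := huv
  obtain ⟨s, hs⟩ := hA
  let B : Set (X' × Y) := Prod.map v id ⁻¹' A
  let r : C(B, A) := ⟨fun b => ⟨Prod.map v id b.1, b.2⟩, by fun_prop⟩
  have hs0 (b : B) : s (r b) 0 = v b.1.1 := congrArg Prod.fst (hs (r b))
  have hs1 (b : B) : f (s (r b) 1) = b.1.2 := congrArg Prod.snd (hs (r b))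
  let γ₁ (b : B) : Path b.1.1 (u (v b.1.1)) :=
    { toFun := fun t => H (b.1.1, unitInterval.symm t)
      continuous_toFun := by fun_prop
      source' := by simp [H1]
      target' := by simp [H0] }
  let γ₂ (b : B) : Path (u (v b.1.1)) (u (s (r b) 1)) :=
    { toFun := fun t => u (s (r b) t)
      continuous_toFun := by fun_prop
      source' := by rw [hs0]
      target' := rfl }
  have h₁ : Continuous ↿γ₁ := by
    change Continuous fun p : B × unitInterval => H (p.1.1.1, unitInterval.symm p.2)
    fun_prop
  have h₂ : Continuous ↿γ₂ := by
    change Continuous fun p : B × unitInterval => u (s (r p.1) p.2)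
    fun_prop
  let G : C(B × unitInterval, X') :=
    ⟨fun p => (γ₁ p.1).trans (γ₂ p.1) p.2, Path.trans_continuous_family γ₁ h₁ γ₂ h₂⟩
  refine ⟨G.curry, fun b => Prod.ext ?_ ?_⟩
  · exact ((γ₁ b).trans (γ₂ b)).source
  · change f' ((γ₁ b).trans (γ₂ b) 1) = b.1.2
    rw [Path.target, ← hs1 b, ← hfu]
    rfl

/-- `TC(f') ≤ TC(f)` when `f` dominates `f'` through a fibrewise map `u` with a homotopy right
inverse `v`, which need not be fibrewise. -/
lemma TCmap_le_of_domination
    {X X' Y : Type*} [TopologicalSpace X] [TopologicalSpace X'] [TopologicalSpace Y]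
    {f : X → Y} {f' : X' → Y} {u : X → X'} (hu : Continuous u) (hfu : f' ∘ u = f)
    {v : X' → X} (hv : Continuous v) (huv : FnHomotopic (u ∘ v) id) :
    TCmap f' ≤ TCmap f := by
  refine sInf_le_sInf ?_
  rintro _ ⟨m, rfl, U, h0, hm, hmono, hopen, hsec⟩
  refine ⟨m, rfl, fun i => Prod.map v id ⁻¹' U i, ?_, ?_, ?_, ?_, ?_⟩
  · simp [h0]
  · simp [hm]
  · exact fun i j hij => Set.preimage_mono (hmono hij)
  · exact fun i => (hopen i).preimage (hv.prodMap continuous_id)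
  · exact fun i h1 hi => (hsec i h1 hi).transfer hu hfu hv huv

theorem tc_fhe_invariant
    {X X' Y : Type*} [TopologicalSpace X] [TopologicalSpace X'] [TopologicalSpace Y]
    [PathConnectedSpace X] [PathConnectedSpace X'] [PathConnectedSpace Y]
    (f : X → Y) (hf : Continuous f) (hfs : Function.Surjective f)
    (f' : X' → Y) (hf' : Continuous f') (hf's : Function.Surjective f')
    (u : X → X') (hu : Continuous u) (hfu : f' ∘ u = f)
    (v : X' → X) (hv : Continuous v) (hfv : f ∘ v = f')
    (huv : FnHomotopic (u ∘ v) id) (hvu : FnHomotopic (v ∘ u) id) :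
    TCmap f = TCmap f' := by
  exact le_antisymm (TCmap_le_of_domination hv hfv hu hvu)
    (TCmap_le_of_domination hu hfu hv huv)
end

section
/- Let f : X → Y be a continuous surjection between path-connected topological spaces. If f admits a continuous section s : Y → X with f ∘ s = id_Y, then TC(Y) ≤ TC(f) ≤ TC(X). -/
/-!
The sectional number is monotone under pullback: if `h : B' → B` is continuous and `k : E → E'`
is a continuous map carrying the fibre of `p : E → B` over `h b` into the fibre of `q : E' → B'`
over `b`, then preimages under `h` of a filtration of `B` filter `B'`, and `k ∘ τ ∘ h` is a partial
section of `q` whenever `τ` is one of `p`; hence `sec q ≤ sec p` (`secNum_le_of_pullback`).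

With a section `s` of `f`, both inequalities are instances. For `TC(Y) ≤ TC(f)`, take
`h (y, y') = (s y, y')` and let `k` send a path `α` in `X` to `f ∘ α`. For `TC(f) ≤ TC(X)`, take
`h (x, y) = (x, s y)` and `k = id`.
-/

open unitInterval

/-- Monotonicity of the sectional number under pullback along `h`. The hypothesis `hk` says that `k`
maps the fibre of `p` over `h b` into the fibre of `q` over `b`; nothing is asked of `k` on fibres
over points outside the range of `h`. -/
theorem secNum_le_of_pullback_s13 {E B E' B' : Type*} [TopologicalSpace E] [TopologicalSpace B]
    [TopologicalSpace E'] [TopologicalSpace B'] {p : E → B} {q : E' → B'}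
    (h : C(B', B)) (k : C(E, E')) (hk : ∀ e b, p e = h b → q (k e) = b) :
    secNum q ≤ secNum p := by
  refine sInf_le_sInf ?_
  rintro _ ⟨m, rfl, U, h0, hm, hmono, hopen, hsecs⟩
  refine ⟨m, rfl, fun i => h ⁻¹' U i, by simp [h0], by simp [hm],
    fun i j hij => Set.preimage_mono (hmono hij), fun i => (hopen i).preimage h.continuous, ?_⟩
  intro i hi him
  obtain ⟨τ, hτ⟩ := hsecs i hi him
  let r : C(↥(h ⁻¹' U i \ h ⁻¹' U (i - 1)), ↥(U i \ U (i - 1))) :=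
    ⟨fun b => ⟨h b, b.2⟩, by fun_prop⟩
  exact ⟨(k.comp τ).comp r, fun b => hk _ _ (hτ (r b))⟩

theorem tc_of_map_with_section
    {X Y : Type*} [TopologicalSpace X] [TopologicalSpace Y]
    [PathConnectedSpace X] [PathConnectedSpace Y]
    (f : X → Y) (hf : Continuous f) (hfs : Function.Surjective f)
    (s : Y → X) (hs : Continuous s) (hsec : ∀ y, f (s y) = y) :
    TCspace Y ≤ TCmap f ∧ TCmap f ≤ TCspace X := by
  constructor
  · refine secNum_le_of_pullback_s13 ⟨fun z : Y × Y => (s z.1, z.2), by fun_prop⟩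
      ⟨fun α => (ContinuousMap.mk f hf).comp α, ContinuousMap.continuous_postcomp _⟩ ?_
    rintro α ⟨y, y'⟩ hα
    obtain ⟨h₀, h₁⟩ := Prod.mk.inj hα
    exact Prod.ext ((congrArg f h₀).trans (hsec y)) h₁
  · refine secNum_le_of_pullback_s13 ⟨fun z : X × Y => (z.1, s z.2), by fun_prop⟩
      (ContinuousMap.id _) ?_
    rintro α ⟨x, y⟩ hα
    obtain ⟨h₀, h₁⟩ := Prod.mk.inj hα
    exact Prod.ext h₀ ((congrArg f h₁).trans (hsec y))
end

section
/- Let f : X → Y be a continuous surjection between path-connected topological spaces. The following two statements are equivalent: (1) TC(f) = 1 and at least one fibre f⁻¹(y₀) is categorical in X; (2) X is contractible and f admits a continuous section s : Y → X with f ∘ s = id_Y. -/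
open unitInterval

/-- The least witness `m` is attained, and `m = 0` would force the base to be empty. -/
lemma secNum_eq_one_iff {E B : Type*} [TopologicalSpace E] [TopologicalSpace B] [Nonempty B]
    (p : E → B) : secNum p = 1 ↔ ∃ s : C(B, E), ∀ b, p (s b) = b := by
  constructor
  · intro h
    have hne : {n : ℕ∞ | ∃ m : ℕ, n = (m : ℕ∞) ∧ SecWitness p m}.Nonempty := by
      by_contra hcon
      rw [Set.not_nonempty_iff_eq_empty] at hcon
      rw [secNum, hcon, sInf_empty] at h
      exact absurd h (by simp)
    obtain ⟨m, hm, U, h0, h1, -, -, hs⟩ := csInf_mem hne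
    have hm1 : m = 1 := by
      have : (m : ℕ∞) = 1 := hm.symm.trans h
      exact_mod_cast this
    subst hm1
    obtain ⟨s, hs⟩ := hs 1 le_rfl le_rfl
    have hmem : ∀ b : B, b ∈ U 1 \ U (1 - 1) := fun b => by simp [h0, h1]
    exact ⟨s.comp ⟨fun b => ⟨b, hmem b⟩, by fun_prop⟩, fun b => hs ⟨b, hmem b⟩⟩
  · rintro ⟨s, hs⟩
    apply le_antisymm
    · refine sInf_le ⟨1, by simp, fun i => if i = 0 then ∅ else Set.univ, by simp, by simp,
        ?_, ?_, ?_⟩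
      · intro i j hij
        rcases Nat.eq_zero_or_pos i with rfl | hi
        · simp
        · simp [show j ≠ 0 by omega]
      · intro i
        dsimp only
        split_ifs <;> simp
      · intro i _ _
        exact ⟨s.comp ⟨Subtype.val, continuous_subtype_val⟩, fun a => hs a⟩
    · refine le_sInf ?_
      rintro n ⟨m, rfl, U, h0, h1, -⟩
      have : m ≠ 0 := by
        rintro rfl
        exact Set.empty_ne_univ (h0.symm.trans h1)
      exact_mod_cast Nat.one_le_iff_ne_zero.mpr this

lemma tcMap_eq_one_iff {X Y : Type*} [TopologicalSpace X] [TopologicalSpace Y]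
    [Nonempty X] [Nonempty Y] (f : X → Y) :
    TCmap f = 1 ↔ ∃ τ : C(X × Y, C(I, X)), ∀ x y, τ (x, y) 0 = x ∧ f (τ (x, y) 1) = y := by
  simp [TCmap, secNum_eq_one_iff, piMap]

theorem tc_eq_one_characterization
    {X Y : Type*} [TopologicalSpace X] [TopologicalSpace Y]
    [PathConnectedSpace X] [PathConnectedSpace Y]
    (f : X → Y) (hf : Continuous f) (hfs : Function.Surjective f) :
    (TCmap f = 1 ∧ ∃ y₀ : Y, IsCategorical (f ⁻¹' {y₀})) ↔
    (ContractibleSpace X ∧ ∃ s : Y → X, Continuous s ∧ ∀ y, f (s y) = y) := by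
  rw [tcMap_eq_one_iff]
  constructor
  · rintro ⟨⟨τ, hτ⟩, y₀, x₁, H, hH0, hH1⟩
    constructor
    · rw [contractible_iff_id_nullhomotopic]
      -- The end map of the deformation, regarded as a map into the fibre over `y₀`.
      let r : C(X, f ⁻¹' {y₀}) := ⟨fun x => ⟨τ (x, y₀) 1, (hτ x y₀).2⟩, by fun_prop⟩
      let K₁ : (ContinuousMap.id X).Homotopy ((⟨Subtype.val, continuous_subtype_val⟩ :
          C(f ⁻¹' {y₀}, X)).comp r) :=
        { toFun := fun q => τ (q.2, y₀) q.1
          continuous_toFun := by fun_prop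
          map_zero_left := fun x => (hτ x y₀).1
          map_one_left := fun x => rfl }
      let K₂ : ((⟨Subtype.val, continuous_subtype_val⟩ :
          C(f ⁻¹' {y₀}, X)).comp r).Homotopy (ContinuousMap.const X x₁) :=
        { toFun := fun q => H (r q.2, q.1)
          continuous_toFun := by fun_prop
          map_zero_left := fun x => hH0 (r x)
          map_one_left := fun x => hH1 (r x) }
      exact ⟨x₁, ⟨K₁.trans K₂⟩⟩
    · obtain ⟨x₀⟩ := (inferInstance : Nonempty X)
      exact ⟨fun y => τ (x₀, y) 1, by fun_prop, fun y => (hτ x₀ y).2⟩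
  · rintro ⟨hX, s, hs, hfs'⟩
    obtain ⟨x₀, ⟨K⟩⟩ := id_nullhomotopic X
    constructor
    · -- `K` contracts `x` to `x₀`; reversed, it carries `x₀` to `s y`.
      let p : C(X × Y, X) := ⟨Prod.fst, continuous_fst⟩
      let q : C(X × Y, X) := ⟨fun z => s z.2, by fun_prop⟩
      let Kp : p.Homotopy (ContinuousMap.const _ x₀) :=
        { toFun := fun z => K (z.1, p z.2)
          continuous_toFun := by fun_prop
          map_zero_left := fun z => by simp
          map_one_left := fun z => by simp }
      let Kq : q.Homotopy (ContinuousMap.const _ x₀) :=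
        { toFun := fun z => K (z.1, q z.2)
          continuous_toFun := by fun_prop
          map_zero_left := fun z => by simp
          map_one_left := fun z => by simp }
      let L := Kp.trans Kq.symm
      refine ⟨ContinuousMap.curry ⟨fun z : (X × Y) × I => L (z.2, z.1), by fun_prop⟩,
        fun x y => ⟨?_, ?_⟩⟩
      · exact L.apply_zero (x, y)
      · exact (congrArg f (L.apply_one (x, y))).trans (hfs' y)
    · obtain ⟨y₀⟩ := (inferInstance : Nonempty Y)
      exact ⟨y₀, x₀, ⟨fun z => K (z.2, (z.1 : X)), by fun_prop⟩, fun x => by simp,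
        fun x => by simp⟩
end

section
/- For every continuous surjection f : X → Y between path-connected topological spaces, the topological complexity of f satisfies the upper bound TC(f) ≤ cat(X) + cat(X)·sec(f) − 1. -/
/-!
A filtration `∅ = U 0 ⊆ ⋯ ⊆ U n = B` by open sets is the same as an upper semicontinuous rank
function `r : B → ℕ` with values `< n`, and the partial sections over the differences glue to one
(discontinuous) global section `s` that is continuous on each level of `r`; see `IsRanked` and
`secWitness_iff`. In this language the three facts needed are short.

* Composition (`IsRanked.comp`): if `g` is ranked with `n` values by `(r', s')` and `f` with `m`
  values by `(r, s)`, then `f ∘ g` is ranked with `n * m` values by the lexicographic rank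
  `n * r y + r' (s y)` and the section `s' ∘ s`.
* Product (`IsRanked.prodMap`): the sum of ranks `< n` and `< m` is a rank `< n + m - 1`. Near a
  point neither summand can increase, so where the sum is constant both summands are.
* Change of total space (`IsRanked.of_comp`): a section of `p ∘ φ` gives one of `p`.

Let `ev₁ : PX → X` be the path fibration. Composition gives `f ∘ ev₁` with `cat X * sec f` values,
and the product with `ev₁` gives `ev₁ × (f ∘ ev₁)` on `PX × PX` with `cat X + cat X * sec f - 1`
values. This map factors as `π_f ∘ φ`, where `φ (α, β)` is `α` reversed followed by `β`.
-/

open unitInterval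

open Filter Topology

/-- The data `(r, s)` of a filtration of `B` with `n` strata and a section over each stratum:
`r b < n` is the (zero-based) index of the stratum of `b`, it is upper semicontinuous, and `s` is
a set-theoretic section of `p`, continuous on every level set of `r`. -/
structure IsRanked {E B : Type*} [TopologicalSpace E] [TopologicalSpace B]
    (p : E → B) (n : ℕ) (r : B → ℕ) (s : B → E) : Prop where
  lt : ∀ b, r b < n
  usc : ∀ b, ∀ᶠ c in 𝓝 b, r c ≤ r b
  sec : ∀ b, p (s b) = b
  cont : ∀ b, ContinuousWithinAt s {c | r c = r b} b

theorem IsRanked.secWitness {E B : Type*} [TopologicalSpace E] [TopologicalSpace B]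
    {p : E → B} {n : ℕ} {r : B → ℕ} {s : B → E} (h : IsRanked p n r s) : SecWitness p n := by
  refine ⟨fun i => {b | r b < i}, by simp, ?_, ?_, ?_, ?_⟩
  · ext b
    simp [h.lt b]
  · intro i j hij b hb
    exact lt_of_lt_of_le hb hij
  · intro i
    rw [isOpen_iff_mem_nhds]
    intro b hb
    filter_upwards [h.usc b] with c hc
    exact lt_of_le_of_lt hc hb
  · intro i hi _
    have key : ∀ b ∈ {b | r b < i} \ {b | r b < i - 1}, r b = i - 1 := by
      intro b hb
      simp only [Set.mem_sdiff, Set.mem_ofPred_eq] at hb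
      omega
    have hs : ContinuousOn s ({b | r b < i} \ {b | r b < i - 1}) := fun b hb =>
      (h.cont b).mono fun c hc => (key c hc).trans (key b hb).symm
    exact ⟨⟨_, hs.domRestrict⟩, fun a => h.sec a⟩

theorem secWitness_iff {E B : Type*} [TopologicalSpace E] [TopologicalSpace B]
    {p : E → B} {n : ℕ} : SecWitness p n ↔ ∃ r s, IsRanked p n r s := by
  classical
  refine ⟨?_, fun ⟨r, s, h⟩ => h.secWitness⟩
  rintro ⟨U, h0, hn, hmono, hopen, hsec⟩
  have hex : ∀ b, ∃ i, b ∈ U (i + 1) := fun b =>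
    ⟨n, hmono (Nat.le_succ n) (hn ▸ Set.mem_univ b)⟩
  let r : B → ℕ := fun b => Nat.find (hex b)
  have hr_mem : ∀ b, b ∈ U (r b + 1) := fun b => Nat.find_spec (hex b)
  have hr_le : ∀ b i, b ∈ U (i + 1) → r b ≤ i := fun b i hi => Nat.find_min' (hex b) hi
  have hr_lt : ∀ b, r b < n := by
    intro b
    rcases n with _ | k
    · rw [h0] at hn
      exact absurd (hn ▸ Set.mem_univ b : b ∈ (∅ : Set B)) (Set.notMem_empty b)
    · exact Nat.lt_succ_of_le (hr_le b k (hn ▸ Set.mem_univ b))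
  have hr_notMem : ∀ b, b ∉ U (r b) := by
    intro b hb
    rcases hk : r b with _ | k
    · rw [hk, h0] at hb
      exact hb
    · rw [hk] at hb
      have := hr_le b k hb
      omega
  have hstratum : ∀ i, i < n → ∃ t : C((U (i + 1) \ U i : Set B), E), ∀ a, p (t a) = a :=
    fun i hi => hsec (i + 1) (by omega) (by omega)
  choose t ht using hstratum
  have hmem : ∀ i b, r b = i → b ∈ U (i + 1) \ U i := by
    rintro _ b rfl
    exact ⟨hr_mem b, hr_notMem b⟩
  refine ⟨r, fun b => t (r b) (hr_lt b) ⟨b, hmem _ b rfl⟩, hr_lt, ?_, fun b => ht _ _ _, ?_⟩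
  · intro b
    filter_upwards [(hopen _).mem_nhds (hr_mem b)] with c hc using hr_le c _ hc
  · intro b
    have hlevel : ∀ i (hi : i < n) c (h : r c = i),
        t (r c) (hr_lt c) ⟨c, hmem _ c rfl⟩ = t i hi ⟨c, hmem i c h⟩ := by
      rintro _ hi c rfl
      rfl
    rw [continuousWithinAt_iff_continuousAt_domRestrict _ (show b ∈ {c | r c = r b} from rfl)]
    have hcont : Continuous fun c : {c | r c = r b} =>
        t (r b) (hr_lt b) ⟨c.1, hmem (r b) c.1 c.2⟩ :=
      (t (r b) (hr_lt b)).continuous.comp (by fun_prop)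
    exact (hcont.congr fun c => (hlevel (r b) (hr_lt b) c.1 c.2).symm).continuousAt

theorem IsRanked.of_comp {D E B : Type*} [TopologicalSpace D] [TopologicalSpace E]
    [TopologicalSpace B] {p : E → B} {φ : D → E} {n : ℕ} {r : B → ℕ} {s : B → D}
    (h : IsRanked (p ∘ φ) n r s) (hφ : Continuous φ) : IsRanked p n r (φ ∘ s) :=
  ⟨h.lt, h.usc, h.sec, fun b => hφ.continuousAt.comp_continuousWithinAt (h.cont b)⟩

theorem IsRanked.comp {D E B : Type*} [TopologicalSpace D] [TopologicalSpace E]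
    [TopologicalSpace B] {f : E → B} {g : D → E} {n m : ℕ}
    {r : B → ℕ} {s : B → E} {r' : E → ℕ} {s' : E → D}
    (hf : IsRanked f m r s) (hg : IsRanked g n r' s') :
    IsRanked (f ∘ g) (n * m) (fun y => n * r y + r' (s y)) (s' ∘ s) := by
  have lex_lt : ∀ {a c x y : ℕ}, a < c → x < n → n * a + x < n * c + y := by
    intro a c x y hac hx
    have := Nat.mul_le_mul_left n (Nat.succ_le_of_lt hac)
    rw [Nat.mul_succ] at this
    omega
  have lex_eq : ∀ y z, n * r y + r' (s y) = n * r z + r' (s z) →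
      r y = r z ∧ r' (s y) = r' (s z) := by
    intro y z h
    rcases lt_trichotomy (r y) (r z) with hlt | heq | hlt
    · exact absurd h (lex_lt hlt (hg.lt _)).ne
    · rw [heq] at h
      exact ⟨heq, by omega⟩
    · exact absurd h (lex_lt hlt (hg.lt _)).ne'
  refine ⟨fun y => ?_, fun y => ?_, fun y => ?_, fun y => ?_⟩
  · simpa using lex_lt (y := 0) (hf.lt y) (hg.lt (s y))
  · have h := (hf.cont y).eventually (hg.usc (s y))
    rw [eventually_nhdsWithin_iff] at h
    filter_upwards [h, hf.usc y] with z hz hle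
    rcases hle.lt_or_eq with hlt | heq
    · exact (lex_lt hlt (hg.lt _)).le
    · have := hz heq
      rw [heq]
      omega
  · simp [hg.sec, hf.sec]
  · refine (hg.cont (s y)).comp ((hf.cont y).mono fun z hz => (lex_eq z y hz).1) ?_
    exact fun z hz => (lex_eq z y hz).2

theorem IsRanked.prodMap {E B E' B' : Type*} [TopologicalSpace E] [TopologicalSpace B]
    [TopologicalSpace E'] [TopologicalSpace B'] {p : E → B} {p' : E' → B'} {n m : ℕ}
    {r : B → ℕ} {s : B → E} {r' : B' → ℕ} {s' : B' → E'}
    (h : IsRanked p n r s) (h' : IsRanked p' m r' s') :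
    IsRanked (Prod.map p p') (n + m - 1) (fun z => r z.1 + r' z.2) (Prod.map s s') := by
  have husc : ∀ z : B × B', ∀ᶠ w in 𝓝 z, r w.1 ≤ r z.1 ∧ r' w.2 ≤ r' z.2 := fun z =>
    (continuous_fst.continuousAt.eventually (h.usc z.1)).and
      (continuous_snd.continuousAt.eventually (h'.usc z.2))
  refine ⟨fun z => ?_, fun z => ?_, fun z => ?_, fun z => ?_⟩
  · have := h.lt z.1
    have := h'.lt z.2
    omega
  · filter_upwards [husc z] with w hw using add_le_add hw.1 hw.2
  · exact Prod.ext (h.sec z.1) (h'.sec z.2)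
  · have hprod : ContinuousWithinAt (Prod.map s s')
        ({c | r c = r z.1} ×ˢ {c | r' c = r' z.2}) z :=
      ContinuousWithinAt.prodMap (h.cont z.1) (h'.cont z.2)
    refine hprod.mono_of_mem_nhdsWithin ?_
    filter_upwards [self_mem_nhdsWithin, nhdsWithin_le_nhds (husc z)] with w hw hle
    -- neither summand increases near `z`, so a constant sum forces both to be constant
    have : r w.1 + r' w.2 = r z.1 + r' z.2 := hw
    exact ⟨show r w.1 = r z.1 by omega, show r' w.2 = r' z.2 by omega⟩

/-- For two paths `α`, `β` starting at `x₀`, the path `α` reversed followed by `β`. -/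
noncomputable def joinPaths {X : Type*} [TopologicalSpace X] (x₀ : X)
    (z : {γ : C(unitInterval, X) // γ 0 = x₀} × {γ : C(unitInterval, X) // γ 0 = x₀}) :
    Path (z.1.1 1) (z.2.1 1) :=
  (Path.mk z.1.1 z.1.2 rfl).symm.trans (Path.mk z.2.1 z.2.2 rfl)

theorem continuous_joinPaths {X : Type*} [TopologicalSpace X] (x₀ : X) :
    Continuous fun z => (joinPaths x₀ z : C(unitInterval, X)) := by
  apply ContinuousMap.continuous_of_continuous_uncurry
  refine Path.trans_continuous_family
    (fun z : {γ : C(unitInterval, X) // γ 0 = x₀} × {γ : C(unitInterval, X) // γ 0 = x₀} =>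
      (Path.mk z.1.1 z.1.2 rfl : Path x₀ (z.1.1 1)).symm) ?_
    (fun z => (Path.mk z.2.1 z.2.2 rfl : Path x₀ (z.2.1 1))) ?_
  · refine Path.symm_continuous_family
      (fun z : {γ : C(unitInterval, X) // γ 0 = x₀} × {γ : C(unitInterval, X) // γ 0 = x₀} =>
        (Path.mk z.1.1 z.1.2 rfl : Path x₀ (z.1.1 1))) ?_
    change Continuous fun w : ({γ : C(unitInterval, X) // γ 0 = x₀} × {γ : C(unitInterval, X) // γ 0 = x₀}) ×
        unitInterval => w.1.1.1 w.2
    fun_prop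
  · change Continuous fun w : ({γ : C(unitInterval, X) // γ 0 = x₀} × {γ : C(unitInterval, X) // γ 0 = x₀}) ×
        unitInterval => w.1.2.1 w.2
    fun_prop

theorem secNum_le {E B : Type*} [TopologicalSpace E] [TopologicalSpace B] {p : E → B} {n : ℕ}
    (h : SecWitness p n) : secNum p ≤ n :=
  sInf_le ⟨n, rfl, h⟩

theorem secNum_eq_top_or {E B : Type*} [TopologicalSpace E] [TopologicalSpace B] (p : E → B) :
    secNum p = ⊤ ∨ ∃ n : ℕ, secNum p = n ∧ SecWitness p n := by
  rcases Set.eq_empty_or_nonempty {n : ℕ∞ | ∃ m : ℕ, n = (m : ℕ∞) ∧ SecWitness p m} with h | h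
  · left
    rw [secNum, h, sInf_empty]
  · exact .inr (csInf_mem h)

theorem tc_general_upper_bound
    {X Y : Type*} [TopologicalSpace X] [TopologicalSpace Y]
    [PathConnectedSpace X] [PathConnectedSpace Y]
    (f : X → Y) (hf : Continuous f) (hfs : Function.Surjective f) :
    ∀ x₀ : X, TCmap f ≤ catSpace X x₀ + catSpace X x₀ * secNum f - 1 := by
  intro x₀
  rcases secNum_eq_top_or
      (fun α : {γ : C(unitInterval, X) // γ 0 = x₀} => (α : C(unitInterval, X)) 1) with
    hX | ⟨n, hn, hwX⟩
  · simp [catSpace, hX]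
  obtain ⟨rX, sX, hrX⟩ := secWitness_iff.1 hwX
  rcases secNum_eq_top_or f with hF | ⟨m, hm, hwF⟩
  · have hn0 : (n : ℕ∞) ≠ 0 := by
      -- `X` is nonempty, so its category is positive
      have := hrX.lt x₀
      exact_mod_cast (by omega : n ≠ 0)
    simp [catSpace, hn, hF, ENat.mul_top hn0]
  obtain ⟨rF, sF, hrF⟩ := secWitness_iff.1 hwF
  have hprod := hrX.prodMap (hrF.comp hrX)
  have hfactor : Prod.map
      (fun α : {γ : C(unitInterval, X) // γ 0 = x₀} => (α : C(unitInterval, X)) 1)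
      (f ∘ fun α : {γ : C(unitInterval, X) // γ 0 = x₀} => (α : C(unitInterval, X)) 1) =
      piMap f ∘ fun z => (joinPaths x₀ z : C(unitInterval, X)) := by
    funext z
    simp [piMap]
    rfl
  rw [hfactor] at hprod
  have hle := secNum_le (hprod.of_comp (continuous_joinPaths x₀)).secWitness
  rw [TCmap, catSpace, hn, hm]
  exact_mod_cast hle
end
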